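/- Let G be a finite simple graph with m edges whose edge set can be partitioned into α edge-disjoint forests (i.e., G has arboricity at most α). Then w(G) = Σ_{e=(u,v) ∈ E(G)} min(d(u), d(v)) ≤ 2mα. -/

import Mathlib

/-!
Root every component of each forest, and send every vertex to its neighbour on the path to the root.
Each edge of a forest then joins some vertex to its parent. Charge the edge to that child: a vertex
is charged at most once per forest, and the weight of an edge is at most the degree of the child.
Hence the weight of the graph is at most `α` times the sum of all degrees, which is `2m`.
-/

namespace EC

/-- The weight `w(e)` of an edge `e = (u,v)` of `G`: the minimum of the degrees of its two
endpoints. -/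
def edgeWeight {V : Type*} [Fintype V] (G : SimpleGraph V) [DecidableRel G.Adj]
    (e : Sym2 V) : ℕ :=
  Sym2.lift ⟨fun u v => min (G.degree u) (G.degree v), fun _ _ => min_comm _ _⟩ e

theorem edgeWeight_eq_inf_map_degree {V : Type*} [Fintype V] (G : SimpleGraph V)
    [DecidableRel G.Adj] (e : Sym2 V) : edgeWeight G e = (e.map (G.degree ·)).inf := by
  induction e with | _ u v => rfl

section Forest

variable {V : Type*} {G : SimpleGraph V}

theorem penultimate_eq_or_penultimate_eq_of_adj (hG : G.IsAcyclic) {r v w : V}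
    {p : G.Walk r v} {q : G.Walk r w} (hp : p.IsPath) (hq : q.IsPath) (hadj : G.Adj v w) :
    p.penultimate = w ∨ q.penultimate = v := by
  by_cases hw : w ∈ p.support
  · exact .inl (hG.eq_penultimate_of_adj_end hp hadj hw).symm
  · have hv : v ∈ q.support :=
      hG.mem_support_of_ne_mem_support_of_adj_of_isPath hq hp hadj.symm hw
    exact .inr (hG.eq_penultimate_of_adj_end hq hadj.symm hv).symm

theorem exists_parent_of_isAcyclic (hG : G.IsAcyclic) :
    ∃ parent : V → V, ∀ e ∈ G.edgeSet, ∃ v, s(v, parent v) = e := by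
  let root (v : V) : V := (G.connectedComponentMk v).out
  have root_eq_of_adj {v w : V} (hadj : G.Adj v w) : root v = root w :=
    congrArg Quot.out (SimpleGraph.ConnectedComponent.sound hadj.reachable)
  have reachable_root (v : V) : G.Reachable (root v) v :=
    SimpleGraph.ConnectedComponent.exact (Quot.out_eq (G.connectedComponentMk v))
  have exists_penultimate (v : V) :
      ∃ u, ∃ p : G.Walk (root v) v, p.IsPath ∧ p.penultimate = u :=
    let ⟨p, hp⟩ := (reachable_root v).exists_isPath
    ⟨p.penultimate, p, hp, rfl⟩
  choose parent hparent using exists_penultimate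
  refine ⟨parent, Sym2.ind fun v w hadj ↦ ?_⟩
  obtain ⟨p, hp, hpv⟩ := hparent v
  obtain ⟨q, hq, hqw⟩ := root_eq_of_adj hadj ▸ hparent w
  obtain hw | hv := penultimate_eq_or_penultimate_eq_of_adj hG hp hq hadj
  · exact ⟨v, by rw [← hpv, hw]⟩
  · exact ⟨w, by rw [← hqw, hv, Sym2.eq_swap]⟩

end Forest

theorem weight_le_of_arboricity_general {V ι M : Type*} [Fintype ι] [AddCommMonoid M]
    [SemilatticeInf M] [IsOrderedAddMonoid M] {f : V → M} (hf : ∀ v, 0 ≤ f v)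
    {F : ι → SimpleGraph V} (hforest : ∀ i, (F i).IsAcyclic)
    {s : Finset (Sym2 V)} (hcover : ∀ e ∈ s, ∃ i, e ∈ (F i).edgeSet)
    {t : Finset V} (hends : ∀ e ∈ s, ∀ v ∈ e, v ∈ t) :
    ∑ e ∈ s, (e.map f).inf ≤ Fintype.card ι • ∑ v ∈ t, f v := by
  classical
  choose parent hparent using fun i ↦ exists_parent_of_isAcyclic (hforest i)
  let parentEdge (x : ι × V) : Sym2 V := s(x.2, parent x.1 x.2)
  have subset_image : s ⊆ (Finset.univ ×ˢ t).image parentEdge := by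
    intro e he
    obtain ⟨i, hi⟩ := hcover e he
    obtain ⟨v, rfl⟩ := hparent i e hi
    have hv : v ∈ t := hends _ he v (Sym2.mem_mk_left _ _)
    exact Finset.mem_image.2 ⟨(i, v), by simpa using hv, rfl⟩
  have inf_nonneg (e : Sym2 V) : 0 ≤ (e.map f).inf := by
    induction e with | _ u v => exact le_inf (hf u) (hf v)
  calc ∑ e ∈ s, (e.map f).inf
      ≤ ∑ e ∈ (Finset.univ ×ˢ t).image parentEdge, (e.map f).inf :=
        Finset.sum_le_sum_of_subset_of_nonneg subset_image fun e _ _ ↦ inf_nonneg e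
    _ ≤ ∑ x ∈ Finset.univ ×ˢ t, ((parentEdge x).map f).inf :=
        Finset.sum_image_le_of_nonneg fun e _ ↦ inf_nonneg e
    _ ≤ ∑ x ∈ Finset.univ ×ˢ t, f x.2 := Finset.sum_le_sum fun _ _ ↦ inf_le_left
    _ = Fintype.card ι • ∑ v ∈ t, f v := by
        simp only [Finset.sum_product, Finset.sum_const, Finset.card_univ]

/-- If the edge set of a finite simple graph `G` with `m` edges can be partitioned into `α`
edge-disjoint forests (i.e. `G` has arboricity at most `α`), then
`w(G) = Σ_{e=(u,v)} min (d(u), d(v)) ≤ 2 m α`. -/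
theorem weight_le_of_arboricity {V : Type*} [Fintype V] [DecidableEq V]
    (G : SimpleGraph V) [DecidableRel G.Adj]
    (α : ℕ) (F : Fin α → SimpleGraph V)
    (hle : ∀ i, F i ≤ G)
    (hforest : ∀ i, (F i).IsAcyclic)
    (hpart : ∀ e ∈ G.edgeSet, ∃! i, e ∈ (F i).edgeSet) :
    ∑ e ∈ G.edgeFinset, edgeWeight G e ≤ 2 * G.edgeFinset.card * α := by
  simpa [edgeWeight_eq_inf_map_degree, G.sum_degrees_eq_twice_card_edges, mul_comm] using
    weight_le_of_arboricity_general (fun v ↦ Nat.zero_le (G.degree v)) hforest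
      (fun e he ↦ (hpart e (SimpleGraph.mem_edgeFinset.1 he)).exists) (t := Finset.univ) (by simp)

end EC
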